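/- For every invertible antisymmetric element t ∈ A_n, the Gauss-type sum ∑_{y ∈ A_n} γ(t,y) = ∑_{y ∈ A_n} ψ(−2^{−1} t y* y) equals (−1)^n q^n. -/

import Mathlib

open Polynomial Matrix

noncomputable section

abbrev TruncPoly (K : Type) [CommRing K] (n : ℕ) := AdjoinRoot (X ^ n : K[X])

def trStar (K : Type) [CommRing K] (σ : K →+* K) (n : ℕ) :
    TruncPoly K n →+* TruncPoly K n :=
  AdjoinRoot.lift ((AdjoinRoot.of _).comp σ) (-(AdjoinRoot.root _)) (by
    have h : (AdjoinRoot.root (X ^ n : K[X])) ^ n = 0 := by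
      rw [← AdjoinRoot.mk_X, ← map_pow, AdjoinRoot.mk_self]
    rw [eval₂_pow, eval₂_X, neg_pow, h, mul_zero])


/-- The `i`-th coefficient of an element of `K[x]/(x^n)`. -/
def trCoeff (K : Type) [CommRing K] (n : ℕ) (a : TruncPoly K n) (i : ℕ) : K :=
  (AdjoinRoot.modByMonicHom (monic_X_pow n) a).coeff i

/-!
Write `y = a + x w + t x^(n+1)` for `y` in `K[x]/(x^(n+2))`, with `a` and `t` in `K`. For an
antisymmetric `b`, the phase `ψ(b y* y)` depends on `t` only through the character
`t ↦ ψ₀(z + (-1)^n z̄)`, where `z = b₀ ā t`, so summing over `t` kills every `a ≠ 0`. As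
`(x w)* (x w) = -x² w* w`, the terms with `a = 0` form the sum for `-b` over `K[x]/(x^n)`. Each such
step contributes a factor `q²`, and it leads down to `n = 0`, where the sum is `1`, or to `n = 1`,
where it is the sum of `ψ₀(b₀ c̄ c)` over `c` in `K`. The norm of `K/k` is onto, so the latter sum
is unchanged when its argument is scaled by `k^×`; summing over all scalings and using the
orthogonality of the characters of `k` shows that it equals `-q`.
-/

section QuadraticGalois

variable {k K : Type*} [Field k] [Field K] [Algebra k K] [Algebra.IsQuadraticExtension k K]
  [IsGalois k K] {σ : Gal(K/k)}

theorem card_gal_eq_two (k K : Type*) [Field k] [Field K] [Algebra k K]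
    [Algebra.IsQuadraticExtension k K] [IsGalois k K] : Nat.card Gal(K/k) = 2 :=
  (IsGalois.card_aut_eq_finrank k K).trans (Algebra.IsQuadraticExtension.finrank_eq_two k K)

theorem univ_gal_eq_pair [Fintype Gal(K/k)] [DecidableEq Gal(K/k)] (hσ : σ ≠ 1) :
    (Finset.univ : Finset Gal(K/k)) = {1, σ} :=
  (Finset.eq_of_subset_of_card_le (Finset.subset_univ _) <| by
    rw [Finset.card_univ, ← Nat.card_eq_fintype_card, card_gal_eq_two,
      Finset.card_pair hσ.symm]).symm

theorem gal_involutive (σ : Gal(K/k)) : Function.Involutive σ := fun z => by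
  have hσ : σ ^ 2 = 1 := card_gal_eq_two k K ▸ pow_card_eq_one'
  simpa [sq] using DFunLike.congr_fun hσ z

theorem algebraMap_norm_eq_gal_mul (hσ : σ ≠ 1) (z : K) :
    algebraMap k K (Algebra.norm k z) = σ z * z := by
  classical
  rw [Algebra.norm_eq_prod_automorphisms, univ_gal_eq_pair hσ, Finset.prod_pair hσ.symm,
    AlgEquiv.one_apply, mul_comm]

theorem exists_add_gal_eq_one (hσ : σ ≠ 1) : ∃ e : K, e + σ e = 1 := by
  classical
  obtain ⟨e, he⟩ := Algebra.trace_surjective k K 1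
  refine ⟨e, ?_⟩
  rw [← map_one (algebraMap k K), ← he, trace_eq_sum_automorphisms, univ_gal_eq_pair hσ,
    Finset.sum_pair hσ.symm, AlgEquiv.one_apply]

theorem exists_add_mul_gal_eq (hσ : σ ≠ 1) {ε z : K} (hz : z = ε * σ z) :
    ∃ w, w + ε * σ w = z := by
  obtain ⟨e, he⟩ := exists_add_gal_eq_one hσ
  exact ⟨e * z, by rw [map_mul]; linear_combination z * he - σ e * hz⟩

theorem exists_algebraMap_mul_eq_of_gal_eq_neg (hσ : σ ≠ 1) {s z : K} (hs : s ≠ 0)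
    (hσs : σ s = -s) (hσz : σ z = -z) : ∃ u : k, s * algebraMap k K u = z := by
  classical
  have hfixed : z / s ∈ Set.range (algebraMap k K) := by
    refine (IsGalois.mem_range_algebraMap_iff_fixed _).2 fun τ => ?_
    have hτ : τ ∈ ({1, σ} : Finset Gal(K/k)) := univ_gal_eq_pair hσ ▸ Finset.mem_univ τ
    rcases Finset.mem_insert.1 hτ with rfl | hτ
    · rfl
    · rw [Finset.mem_singleton.1 hτ, map_div₀, hσs, hσz, neg_div_neg_eq]
  obtain ⟨u, hu⟩ := hfixed
  exact ⟨u, by rw [hu, mul_div_cancel₀ _ hs]⟩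

end QuadraticGalois

section FiniteFieldSums

variable {k K R : Type*} [Field k] [Field K] [Fintype K] [Algebra k K] [CommRing R]

theorem sum_addChar_mul_norm (φ : AddChar k R) {u : k} (hu : u ≠ 0) :
    ∑ z : K, φ (u * Algebra.norm k z) = ∑ z : K, φ (Algebra.norm k z) := by
  obtain ⟨w, rfl⟩ := FiniteField.norm_surjective k K u
  have hw : w ≠ 0 := by rintro rfl; exact hu (Algebra.norm_zero ..)
  exact Fintype.sum_equiv (Equiv.mulLeft₀ w hw) _ _ fun z =>
    congrArg φ (map_mul (Algebra.norm k) w z).symm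

variable [Fintype k] [IsDomain R]

theorem sub_one_mul_sum_addChar_norm {φ : AddChar k R} (hφ : φ ≠ 1) :
    ((Fintype.card k : R) - 1) * ∑ z : K, φ (Algebra.norm k z) =
      Fintype.card k - Fintype.card K := by
  classical
  have by_scalars : ∑ u : k, ∑ z : K, φ (u * Algebra.norm k z) =
      Fintype.card K + ((Fintype.card k : R) - 1) * ∑ z : K, φ (Algebra.norm k z) := by
    rw [← Finset.add_sum_erase _ _ (Finset.mem_univ (0 : k)),
      Finset.sum_congr rfl fun u hu => sum_addChar_mul_norm φ (Finset.ne_of_mem_erase hu)]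
    simp [Nat.cast_sub (Nat.one_le_iff_ne_zero.2 (Fintype.card_ne_zero (α := k)))]
  have by_orthogonality : ∑ u : k, ∑ z : K, φ (u * Algebra.norm k z) = Fintype.card k := by
    rw [Finset.sum_comm]
    simp only [AddChar.sum_mulShift _ (AddChar.IsPrimitive.of_ne_one hφ), Algebra.norm_eq_zero_iff,
      Nat.cast_ite, Nat.cast_zero, Finset.sum_ite_eq', Finset.mem_univ, if_true]
  linear_combination by_orthogonality - by_scalars

theorem sum_addChar_mul_gal_mul [CharZero R] [Algebra.IsQuadraticExtension k K] {σ : Gal(K/k)}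
    (hσ : σ ≠ 1) (ψ : AddChar K R) (hψ : ∃ z, σ z = -z ∧ ψ z ≠ 1) {s : K} (hs : s ≠ 0)
    (hσs : σ s = -s) : ∑ c : K, ψ (s * σ c * c) = -Fintype.card k := by
  let φ : AddChar k R := ψ.compAddMonoidHom
    ((AddMonoidHom.mulLeft s).comp (algebraMap k K).toAddMonoidHom)
  have φ_norm (c : K) : φ (Algebra.norm k c) = ψ (s * σ c * c) := by
    rw [mul_assoc, ← algebraMap_norm_eq_gal_mul hσ]
    rfl
  have φ_ne_one : φ ≠ 1 := by
    obtain ⟨z, hσz, hz⟩ := hψ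
    obtain ⟨u, rfl⟩ := exists_algebraMap_mul_eq_of_gal_eq_neg hσ hs hσs hσz
    exact AddChar.ne_one_iff.2 ⟨u, hz⟩
  have card_ne_one : (Fintype.card k : R) - 1 ≠ 0 :=
    sub_ne_zero.2 (Nat.cast_ne_one.2 Fintype.one_lt_card.ne')
  have card_eq_sq : (Fintype.card K : R) = Fintype.card k ^ 2 := by
    rw [Module.card_eq_pow_finrank (K := k), Algebra.IsQuadraticExtension.finrank_eq_two,
      Nat.cast_pow]
  have key := sub_one_mul_sum_addChar_norm (K := K) φ_ne_one
  simp only [φ_norm] at key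
  exact mul_left_cancel₀ card_ne_one (by linear_combination key - card_eq_sq)

theorem sum_addChar_add_mul_map [DecidableEq K] {σ : K →+* K} {ψ : AddChar K R} {ε : K}
    (hψ : ∃ z, ψ (z + ε * σ z) ≠ 1) (c : K) :
    ∑ t : K, ψ (c * t + ε * σ (c * t)) = if c = 0 then (Fintype.card K : R) else 0 := by
  let χ : AddChar K R := ψ.compAddMonoidHom
    (AddMonoidHom.id K + (AddMonoidHom.mulLeft ε).comp σ.toAddMonoidHom)
  have χ_ne_one : χ ≠ 1 := AddChar.ne_one_iff.2 hψ
  simpa [χ, mul_comm c] using AddChar.sum_mulShift c (AddChar.IsPrimitive.of_ne_one χ_ne_one)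

end FiniteFieldSums

section PolyStar

variable {A : Type*} [CommRing A] (σ : A →+* A)

/-- The lift to `A[X]` of the involution of `A[X]/(X^n)`: it acts by `σ` on coefficients and sends
`X` to `-X`. -/
def polyStar : A[X] →+* A[X] :=
  (compRingHom (-X)).comp (mapRingHom σ)

@[simp]
theorem polyStar_C (a : A) : polyStar σ (C a) = C (σ a) := by
  simp [polyStar]

@[simp]
theorem polyStar_X : polyStar σ X = -X := by
  simp [polyStar]

theorem polyStar_coeff (P : A[X]) (i : ℕ) :
    (polyStar σ P).coeff i = (-1) ^ i * σ (P.coeff i) := by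
  have neg_X : (-X : A[X]) = C (-1) * X := by simp
  rw [polyStar, RingHom.comp_apply, coe_compRingHom_apply, coe_mapRingHom, neg_X,
    comp_C_mul_X_coeff, coeff_map, mul_comm]

theorem coeff_mul_polyStar_mul_add_C_mul_X_pow (B P : A[X]) (t : A) {N : ℕ} (hN : 0 < N) :
    (B * polyStar σ (P + C t * X ^ N) * (P + C t * X ^ N)).coeff N =
      (B * polyStar σ P * P).coeff N + (B.coeff 0 * σ (P.coeff 0) * t +
        (-1) ^ N * (B.coeff 0 * σ t * P.coeff 0)) := by
  have expand : B * polyStar σ (P + C t * X ^ N) * (P + C t * X ^ N) =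
      B * polyStar σ P * P + (B * polyStar σ P * C t +
        C ((-1) ^ N * σ t) * (B * P + B * C t * X ^ N)) * X ^ N := by
    simp only [map_add, map_mul, map_pow, map_neg, map_one, polyStar_C, polyStar_X,
      neg_pow (X : A[X])]
    ring
  rw [expand, coeff_add, coeff_mul_X_pow', if_pos le_rfl, Nat.sub_self]
  simp only [coeff_add, mul_coeff_zero, polyStar_coeff, coeff_C_zero, coeff_X_pow, hN.ne,
    if_false, pow_zero, one_mul, mul_zero, add_zero]
  ring

theorem mul_polyStar_X_mul_mul_X_mul (B W : A[X]) :
    B * polyStar σ (X * W) * (X * W) = -B * polyStar σ W * W * X ^ 2 := by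
  rw [map_mul, polyStar_X]
  ring

end PolyStar

section TruncPoly

variable {A : Type} [CommRing A] {n : ℕ}

theorem trCoeff_mk (P : A[X]) {i : ℕ} (hi : i < n) :
    trCoeff A n (AdjoinRoot.mk _ P) i = P.coeff i := by
  rw [trCoeff, AdjoinRoot.modByMonicHom_mk]
  conv_rhs => rw [← modByMonic_add_div P (X ^ n), coeff_add, coeff_X_pow_mul', if_neg hi.not_ge,
    add_zero]

theorem trStar_mk (σ : A →+* A) (P : A[X]) :
    trStar A σ n (AdjoinRoot.mk _ P) = AdjoinRoot.mk _ (polyStar σ P) := by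
  suffices h : (trStar A σ n).comp (AdjoinRoot.mk _) = (AdjoinRoot.mk _).comp (polyStar σ) from
    RingHom.congr_fun h P
  ext <;> simp [trStar]

theorem trStar_of (σ : A →+* A) (a : A) :
    trStar A σ n (AdjoinRoot.of _ a) = AdjoinRoot.of _ (σ a) := by
  rw [trStar, AdjoinRoot.lift_of, RingHom.comp_apply]

theorem trCoeff_neg (b : TruncPoly A n) (i : ℕ) : trCoeff A n (-b) i = -trCoeff A n b i := by
  rw [trCoeff, map_neg, coeff_neg, trCoeff]

theorem trCoeff_trStar (σ : A →+* A) (b : TruncPoly A n) {i : ℕ} (hi : i < n) :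
    trCoeff A n (trStar A σ n b) i = (-1) ^ i * σ (trCoeff A n b i) := by
  obtain ⟨B, rfl⟩ := AdjoinRoot.mk_surjective b
  rw [trStar_mk, trCoeff_mk _ hi, trCoeff_mk _ hi, polyStar_coeff]

theorem map_trCoeff_zero_of_trStar_eq_neg {σ : A →+* A} (hn : 0 < n) {b : TruncPoly A n}
    (hb : trStar A σ n b = -b) : σ (trCoeff A n b 0) = -trCoeff A n b 0 := by
  rw [← trCoeff_neg, ← hb, trCoeff_trStar σ b hn, pow_zero, one_mul]

theorem trStar_neg_of_inv_two_mul {K : Type} [Field K] {σ : K →+* K} {b : TruncPoly K n}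
    (hb : trStar K σ n b = -b) :
    trStar K σ n (-(AdjoinRoot.of (X ^ n : K[X]) 2⁻¹) * b) =
      -(-(AdjoinRoot.of (X ^ n : K[X]) 2⁻¹) * b) := by
  rw [map_mul, map_neg, trStar_of, hb, map_inv₀, map_ofNat, mul_neg]

theorem isUnit_trCoeff_zero (hn : 0 < n) {b : TruncPoly A n} (hb : IsUnit b) :
    IsUnit (trCoeff A n b 0) := by
  obtain ⟨v, hv⟩ := hb.exists_right_inv
  obtain ⟨B, rfl⟩ := AdjoinRoot.mk_surjective b
  obtain ⟨V, rfl⟩ := AdjoinRoot.mk_surjective v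
  rw [← map_mul, ← map_one (AdjoinRoot.mk _)] at hv
  have hcoeff := congrArg (trCoeff A n · 0) hv
  simp only [trCoeff_mk _ hn, mul_coeff_zero, coeff_one_zero] at hcoeff
  exact trCoeff_mk B hn ▸ IsUnit.of_mul_eq_one _ hcoeff

theorem bijective_mk_ofFn [DecidableEq A] (n : ℕ) :
    Function.Bijective fun c : Fin n → A => AdjoinRoot.mk (X ^ n : A[X]) (ofFn n c) := by
  refine ⟨fun c d hcd => ?_, fun y => ?_⟩
  · funext i
    have hcoeff := congrArg (trCoeff A n · i) hcd
    simpa only [trCoeff_mk _ i.2, ofFn_coeff_eq_val_of_lt _ i.2] using hcoeff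
  · obtain ⟨P, rfl⟩ := AdjoinRoot.mk_surjective y
    refine ⟨toFn n P, AdjoinRoot.mk_eq_mk.2 (X_pow_dvd_iff.2 fun i hi => ?_)⟩
    rw [coeff_sub, ofFn_coeff_eq_val_of_lt _ hi]
    exact sub_self _

end TruncPoly

section HermitianGaussSum

section CommRing

variable {A R : Type*} [CommRing A] [DecidableEq A] [CommRing R]

theorem ofFn_cons_snoc {n : ℕ} (a t : A) (w : Fin n → A) :
    ofFn (n + 2) (Fin.cons a (Fin.snoc w t) : Fin (n + 2) → A) =
      C a + X * ofFn n w + C t * X ^ (n + 1) := by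
  simp only [ofFn_eq_sum_monomial, Fin.sum_univ_succ (n := n + 1), Fin.sum_univ_castSucc (n := n),
    Fin.cons_zero, Fin.cons_succ, Fin.snoc_castSucc, Fin.snoc_last, Fin.val_zero, Fin.val_succ,
    Fin.val_castSucc, Fin.val_last, Finset.mul_sum, X_mul_monomial, monomial_zero_left,
    C_mul_X_pow_eq_monomial, add_assoc]

theorem coeff_mul_polyStar_X_mul_ofFn (σ : A →+* A) (B : A[X]) {n : ℕ} (w : Fin n → A) :
    (B * polyStar σ (X * ofFn n w) * (X * ofFn n w)).coeff (n + 1) =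
      (-B * polyStar σ (ofFn n w) * ofFn n w).coeff (n - 1) := by
  rw [mul_polyStar_X_mul_mul_X_mul]
  cases n with
  | zero => simp
  | succ n => rw [coeff_mul_X_pow, Nat.add_sub_cancel]

variable [Fintype A]

theorem sum_ofFn_add_two {M : Type*} [AddCommMonoid M] (n : ℕ) (f : A[X] → M) :
    ∑ c : Fin (n + 2) → A, f (ofFn (n + 2) c) =
      ∑ a : A, ∑ w : Fin n → A, ∑ t : A, f (C a + X * ofFn n w + C t * X ^ (n + 1)) := by
  rw [← (Fin.consEquiv fun _ => A).sum_comp, Fintype.sum_prod_type]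
  refine Finset.sum_congr rfl fun a _ => ?_
  rw [← (Fin.snocEquiv fun _ => A).sum_comp, Fintype.sum_prod_type_right]
  exact Finset.sum_congr rfl fun w _ => Finset.sum_congr rfl fun t _ =>
    congrArg f (ofFn_cons_snoc a t w)

/-- The Gauss sum `∑ ψ(λ(B P* P))` of the Hermitian form `B P* P` on `A[X]/(X^n)`, where `λ` is the
coefficient of `X^(n-1)`; the classes modulo `X^n` are represented by the polynomials `P` of degree
less than `n`. For `n = 0` only `P = 0` occurs, so the truncated subtraction is harmless. -/
def hermitianGaussSum (σ : A →+* A) (ψ : AddChar A R) (n : ℕ) (B : A[X]) : R :=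
  ∑ c : Fin n → A, ψ ((B * polyStar σ (ofFn n c) * ofFn n c).coeff (n - 1))

variable {σ : A →+* A} {ψ : AddChar A R}

theorem hermitianGaussSum_zero (B : A[X]) : hermitianGaussSum σ ψ 0 B = 1 := by
  simp [hermitianGaussSum]

theorem hermitianGaussSum_one (B : A[X]) :
    hermitianGaussSum σ ψ 1 B = ∑ c : A, ψ (B.coeff 0 * σ c * c) :=
  Fintype.sum_equiv (Equiv.funUnique (Fin 1) A) _ _ fun c => by
    simp [mul_coeff_zero, polyStar_coeff]

theorem sum_truncPoly_eq_hermitianGaussSum {A : Type} [CommRing A] [Fintype A] [DecidableEq A]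
    {σ : A →+* A} {ψ : AddChar A R} {n : ℕ} (hn : 0 < n) [Fintype (TruncPoly A n)] (B : A[X]) :
    ∑ y : TruncPoly A n,
        ψ (trCoeff A n (AdjoinRoot.mk _ B * trStar A σ n y * y) (n - 1)) =
      hermitianGaussSum σ ψ n B := by
  rw [hermitianGaussSum, ← (bijective_mk_ofFn n).sum_comp]
  simp only [trStar_mk, ← map_mul, trCoeff_mk _ (Nat.sub_one_lt_of_lt hn)]

end CommRing

variable {K R : Type*} [Field K] [Fintype K] [DecidableEq K] [CommRing R] {σ : K →+* K}
  {ψ : AddChar K R}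

theorem sum_top_coeff_hermitian [IsDomain R] (hσ : Function.Involutive σ) {n : ℕ}
    (hψ : ∃ z, ψ (z + (-1) ^ n * σ z) ≠ 1) {B : K[X]} (hB : σ (B.coeff 0) = -B.coeff 0)
    (hB₀ : B.coeff 0 ≠ 0) (P : K[X]) :
    ∑ t : K, ψ ((B * polyStar σ (P + C t * X ^ (n + 1)) * (P + C t * X ^ (n + 1))).coeff (n + 1)) =
      if P.coeff 0 = 0 then Fintype.card K * ψ ((B * polyStar σ P * P).coeff (n + 1)) else 0 := by
  have cross_terms (t : K) : B.coeff 0 * σ (P.coeff 0) * t +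
      (-1) ^ (n + 1) * (B.coeff 0 * σ t * P.coeff 0) =
      B.coeff 0 * σ (P.coeff 0) * t + (-1) ^ n * σ (B.coeff 0 * σ (P.coeff 0) * t) := by
    rw [map_mul, map_mul, hB, hσ]
    ring
  simp only [coeff_mul_polyStar_mul_add_C_mul_X_pow σ B P _ n.succ_pos, cross_terms,
    AddChar.map_add_eq_mul ψ (coeff _ _), ← Finset.mul_sum, sum_addChar_add_mul_map hψ,
    mul_eq_zero, hB₀, map_eq_zero, false_or, mul_ite, mul_zero, mul_comm (Fintype.card K : R)]

theorem hermitianGaussSum_add_two [IsDomain R] (hσ : Function.Involutive σ) {n : ℕ}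
    (hψ : ∃ z, ψ (z + (-1) ^ n * σ z) ≠ 1) {B : K[X]} (hB : σ (B.coeff 0) = -B.coeff 0)
    (hB₀ : B.coeff 0 ≠ 0) :
    hermitianGaussSum σ ψ (n + 2) B = Fintype.card K * hermitianGaussSum σ ψ n (-B) := by
  simp only [hermitianGaussSum, Nat.add_one_sub_one, Finset.mul_sum]
  rw [sum_ofFn_add_two n fun P => ψ ((B * polyStar σ P * P).coeff (n + 1)),
    Fintype.sum_eq_single 0]
  · simp only [sum_top_coeff_hermitian hσ hψ hB hB₀, C_0, zero_add, mul_coeff_zero, coeff_X_zero,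
      zero_mul, if_true, coeff_mul_polyStar_X_mul_ofFn]
  · intro a ha
    simp only [sum_top_coeff_hermitian hσ hψ hB hB₀, coeff_add, coeff_C_zero, mul_coeff_zero,
      coeff_X_zero, zero_mul, add_zero, ha, if_false, Finset.sum_const_zero]

theorem hermitianGaussSum_eq_neg_card_pow [IsDomain R] [CharZero R] {k : Type*} [Field k]
    [Fintype k] [Algebra k K] [Algebra.IsQuadraticExtension k K] {σ : Gal(K/k)} (hσ : σ ≠ 1)
    {n : ℕ} (hψ : ∃ z, σ z = (-1) ^ n * z ∧ ψ z ≠ 1) {B : K[X]}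
    (hB : σ (B.coeff 0) = -B.coeff 0) (hB₀ : B.coeff 0 ≠ 0) :
    hermitianGaussSum (σ : K →+* K) ψ n B = (-Fintype.card k) ^ n := by
  induction n using Nat.twoStepInduction generalizing B with
  | zero => rw [hermitianGaussSum_zero, pow_zero]
  | one =>
    rw [hermitianGaussSum_one, pow_one]
    exact sum_addChar_mul_gal_mul hσ ψ (by simpa using hψ) hB₀ hB
  | more n ih _ =>
    simp only [pow_add _ n 2, neg_one_sq, mul_one] at hψ
    have hψ_image : ∃ w, ψ (w + (-1) ^ n * σ w) ≠ 1 := by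
      obtain ⟨z, hσz, hz⟩ := hψ
      have z_eq : z = (-1) ^ n * σ z := by
        rw [hσz, ← mul_assoc, ← mul_pow, neg_one_mul, neg_neg, one_pow, one_mul]
      obtain ⟨w, rfl⟩ := exists_add_mul_gal_eq hσ z_eq
      exact ⟨w, hz⟩
    rw [hermitianGaussSum_add_two (gal_involutive σ) hψ_image hB hB₀,
      ih hψ (by rw [coeff_neg, map_neg, hB]) (by rwa [coeff_neg, neg_ne_zero]),
      Module.card_eq_pow_finrank (K := k), Algebra.IsQuadraticExtension.finrank_eq_two]
    push_cast
    ring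

end HermitianGaussSum

section QuadraticOfCard

theorem two_ne_zero_of_odd_card {F : Type*} [Field F] [Fintype F] (hF : Odd (Fintype.card F)) :
    (2 : F) ≠ 0 :=
  Ring.two_ne_zero fun hchar =>
    Nat.not_even_iff_odd.2 hF <| Nat.even_iff.2 <| FiniteField.even_card_of_char_two hchar

variable {k K : Type*} [Field k] [Field K] [Algebra k K]

theorem isQuadraticExtension_of_card_eq_sq [Fintype k] [Fintype K]
    (hcard : Fintype.card K = Fintype.card k ^ 2) : Algebra.IsQuadraticExtension k K where
  finrank_eq_two' := Nat.pow_right_injective (Fintype.one_lt_card (α := k)) <|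
    (Module.card_eq_pow_finrank (K := k) (V := K)).symm.trans hcard

theorem exists_gal_coe_eq [Algebra.IsAlgebraic k K] {σ : K →+* K}
    (hσ : ∀ c : k, σ (algebraMap k K c) = algebraMap k K c) :
    ∃ τ : Gal(K/k), (τ : K →+* K) = σ :=
  ⟨(Algebra.IsAlgebraic.algEquivEquivAlgHom k K).symm { toRingHom := σ, commutes' := hσ }, rfl⟩

end QuadraticOfCard

theorem gauss_sum_truncPoly_general {k R : Type*} {K : Type} [Field k] [Fintype k] [Field K]
    [Algebra k K] [Algebra.IsQuadraticExtension k K] [CommRing R] [IsDomain R] [CharZero R]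
    {σ : Gal(K/k)} (hσ : σ ≠ 1) {n : ℕ} (hn : 0 < n) [Fintype (TruncPoly K n)]
    {ψ : AddChar K R} (hψ : ∃ z, σ z = (-1) ^ n * z ∧ ψ z ≠ 1) {b : TruncPoly K n}
    (hb : σ (trCoeff K n b 0) = -trCoeff K n b 0) (hb₀ : trCoeff K n b 0 ≠ 0) :
    ∑ y : TruncPoly K n, ψ (trCoeff K n (b * trStar K (σ : K →+* K) n y * y) (n - 1)) =
      (-1) ^ n * (Fintype.card k : R) ^ n := by
  classical
  have : Finite K := Module.finite_of_finite k
  have : Fintype K := Fintype.ofFinite K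
  obtain ⟨B, rfl⟩ := AdjoinRoot.mk_surjective b
  rw [trCoeff_mk _ hn] at hb hb₀
  rw [sum_truncPoly_eq_hermitianGaussSum hn, hermitianGaussSum_eq_neg_card_pow hσ hψ hb hb₀,
    neg_pow]

theorem exists_eigenvector_addChar_ne_one {k K R : Type*} [Field k] [Field K] [Algebra k K]
    [CommRing R] {σ : K →+* K} (hσ : ∀ c : k, σ (algebraMap k K c) = algebraMap k K c) {Δ : K}
    (hσΔ : σ Δ = -Δ) {ψ : AddChar K R} (hψk : ∃ c : k, ψ (algebraMap k K c) ≠ 1)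
    (hψΔ : ∃ c : k, ψ (Δ * algebraMap k K c) ≠ 1) (n : ℕ) :
    ∃ z, σ z = (-1) ^ n * z ∧ ψ z ≠ 1 := by
  rcases neg_one_pow_eq_or K n with hn | hn
  · obtain ⟨c, hc⟩ := hψk
    exact ⟨_, by rw [hn, hσ, one_mul], hc⟩
  · obtain ⟨c, hc⟩ := hψΔ
    exact ⟨_, by rw [hn, map_mul, hσΔ, hσ, neg_mul, neg_one_mul], hc⟩

/-- for every invertible antisymmetric `t ∈ A_n`, the Gauss-type
sum `∑_{y ∈ A_n} ψ(−2⁻¹·t·y*·y)` equals `(−1)ⁿ·qⁿ`. -/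
theorem gauss_sum_truncPoly
    (p t q : ℕ) (hp : p.Prime) (hp2 : Odd p) (ht : 0 < t) (hq : q = p ^ t)
    (k K : Type) [Field k] [Fintype k] [Field K] [Fintype K] [Algebra k K]
    (hcardk : Fintype.card k = q) (hcardK : Fintype.card K = q ^ 2)
    (Δ : K) (hΔ : Δ ∉ Set.range (algebraMap k K))
    (hΔ2 : Δ ^ 2 ∈ Set.range (algebraMap k K))
    (σ : K →+* K) (hσk : ∀ c : k, σ (algebraMap k K c) = algebraMap k K c)
    (hσne : σ ≠ RingHom.id K) (hσΔ : σ Δ = -Δ)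
    (n : ℕ) (hn : 0 < n) [Fintype (TruncPoly K n)]
    (ψ₀ : AddChar K ℂ)
    (hψk : ∃ c : k, ψ₀ (algebraMap k K c) ≠ 1)
    (hψΔ : ∃ c : k, ψ₀ (Δ * algebraMap k K c) ≠ 1)
    (b : TruncPoly K n) (hb : trStar K σ n b = -b) (hbu : IsUnit b) :
    ∑ y : TruncPoly K n,
        ψ₀ (trCoeff K n
          (-(AdjoinRoot.of (X ^ n : K[X]) (2⁻¹ : K)) * b * trStar K σ n y * y) (n - 1)) =
      (-1) ^ n * (q : ℂ) ^ n := by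
  have : Algebra.IsQuadraticExtension k K :=
    isQuadraticExtension_of_card_eq_sq (hcardK.trans (by rw [hcardk]))
  have hK2 : (2 : K) ≠ 0 := two_ne_zero_of_odd_card (by rw [hcardK, hq]; exact (hp2.pow).pow)
  have hψ := exists_eigenvector_addChar_ne_one hσk hσΔ hψk hψΔ n
  obtain ⟨τ, rfl⟩ := exists_gal_coe_eq hσk
  have hτ : τ ≠ 1 := fun h => hσne (by rw [h]; rfl)
  have hunit : IsUnit (-(AdjoinRoot.of (X ^ n : K[X]) 2⁻¹) * b) :=
    ((isUnit_iff_ne_zero.2 (inv_ne_zero hK2)).map _).neg.mul hbu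
  rw [← hcardk]
  exact gauss_sum_truncPoly_general hτ hn hψ
    (map_trCoeff_zero_of_trStar_eq_neg hn (trStar_neg_of_inv_two_mul hb))
    (isUnit_trCoeff_zero hn hunit).ne_zero
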